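/- arXiv:1609.00966 — 4 statements merged into one kernel-verified Lean document; each statement's English description precedes it below -/
import Mathlib

section
/- For all φ*, φ ∈ H₋ and θ*, θ ∈ H₊, setting ψ̃* = (b·Q*Q + 𝔔)⁻¹ (b·Q*θ* + 𝔔 Q₋ φ*) and ψ̃ = (b·Q*Q + 𝔔)⁻¹ (b·Q*θ + 𝔔 Q₋ φ), one has Ǎ(θ*, θ; φ*, φ) = 𝒜_eff(θ*, θ; ψ̃*, ψ̃; φ*, φ). -/
open RealInnerProductSpace

/-!
The field `ψ̃` is the critical point of `𝒜_eff` under variations of `ψ*`, that is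
`𝔔 (ψ̃ - Q₋φ) = Q* (b (θ - Qψ̃))`. At `ψ = ψ̃` the action therefore does not depend on `ψ*`:
moving `Q*` across the inner product turns it into the pairing of `θ* - Q Q₋φ*` with `b (θ - Qψ̃)`.
Applying `Q 𝔔⁻¹` to the critical point equation gives `(1/b + Q 𝔔⁻¹ Q*) (b (θ - Qψ̃)) = θ - Q Q₋φ`,
so `b (θ - Qψ̃) = 𝔔̌ (θ - Q Q₋φ)`.
-/

section LinearAlgebra

theorem ringInverse_apply_eq_iff {R M : Type*} [Semiring R] [AddCommMonoid M] [Module R M]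
    {T : Module.End R M} (hT : IsUnit T) {x y : M} : Ring.inverse T y = x ↔ y = T x := by
  constructor
  · rintro rfl
    rw [← Module.End.mul_apply, Ring.mul_inverse_cancel T hT, Module.End.one_apply]
  · rintro rfl
    rw [← Module.End.mul_apply, Ring.inverse_mul_cancel T hT, Module.End.one_apply]

variable {R M N : Type*} [AddCommGroup M] [AddCommGroup N]

theorem apply_sub_eq_of_normal_equation [Ring R] [Module R M] [Module R N] {T : Module.End R M}
    {Q : M →ₗ[R] N} {Q' : N →ₗ[R] M} {b : R} {θ : N} {u ψ : M}
    (hψ : b • Q' (Q ψ) + T ψ = b • Q' θ + T u) :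
    T (ψ - u) = Q' (b • (θ - Q ψ)) := by
  rw [map_sub, map_smul, map_sub, smul_sub, sub_eq_sub_iff_add_eq_add, add_comm, hψ]

theorem ringInverse_inv_smul_one_add_comp_apply [Field R] [Module R M] [Module R N]
    {T : Module.End R M} {Q : M →ₗ[R] N} {Q' : N →ₗ[R] M} {b : R} (hb : b ≠ 0) (hT : IsUnit T)
    (hS : IsUnit (b⁻¹ • (1 : Module.End R N) + Q ∘ₗ Ring.inverse T ∘ₗ Q')) {θ : N} {u ψ : M}
    (hψ : b • Q' (Q ψ) + T ψ = b • Q' θ + T u) :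
    Ring.inverse (b⁻¹ • (1 : Module.End R N) + Q ∘ₗ Ring.inverse T ∘ₗ Q') (θ - Q u)
      = b • (θ - Q ψ) := by
  have hinv : Ring.inverse T (Q' (b • (θ - Q ψ))) = ψ - u :=
    (ringInverse_apply_eq_iff hT).2 (apply_sub_eq_of_normal_equation hψ).symm
  rw [ringInverse_apply_eq_iff hS]
  calc θ - Q u = (θ - Q ψ) + Q (ψ - u) := by rw [map_sub, sub_add_sub_cancel]
    _ = b⁻¹ • b • (θ - Q ψ) + Q (Ring.inverse T (Q' (b • (θ - Q ψ)))) := by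
      rw [inv_smul_smul₀ hb, hinv]

end LinearAlgebra

section InnerProduct

open scoped InnerProductSpace
open RCLike

variable {𝕜 E F : Type*} [RCLike 𝕜]
  [SeminormedAddCommGroup E] [InnerProductSpace 𝕜 E]
  [SeminormedAddCommGroup F] [InnerProductSpace 𝕜 F]

theorem isUnit_of_inner_map_self_ne_zero [FiniteDimensional 𝕜 E] {T : Module.End 𝕜 E}
    (hT : ∀ x, x ≠ 0 → ⟪T x, x⟫_𝕜 ≠ 0) : IsUnit T := by
  rw [LinearMap.isUnit_iff_ker_eq_bot, LinearMap.ker_eq_bot']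
  intro x hx
  by_contra hne
  exact hT x hne (by rw [hx, inner_zero_left])

theorem isUnit_of_re_inner_map_self_pos [FiniteDimensional 𝕜 E] {T : Module.End 𝕜 E}
    (hT : ∀ x, x ≠ 0 → 0 < re ⟪T x, x⟫_𝕜) : IsUnit T :=
  isUnit_of_inner_map_self_ne_zero fun x hx h ↦ by simpa [h] using hT x hx

theorem re_inner_map_self_nonneg_of_pos {T : Module.End 𝕜 E}
    (hT : ∀ x, x ≠ 0 → 0 < re ⟪T x, x⟫_𝕜) (x : E) : 0 ≤ re ⟪T x, x⟫_𝕜 := by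
  obtain rfl | hx := eq_or_ne x 0
  · rw [inner_zero_right, map_zero]
  · exact (hT x hx).le

variable {T : Module.End 𝕜 E} {Q : E →ₗ[𝕜] F} {Q' : F →ₗ[𝕜] E}

theorem isUnit_smul_adjoint_comp_self_add [FiniteDimensional 𝕜 E]
    (hQ : ∀ x y, ⟪x, Q' y⟫_𝕜 = ⟪Q x, y⟫_𝕜) {b : 𝕜} (hb : 0 ≤ re b)
    (hT : ∀ x, x ≠ 0 → 0 < re ⟪T x, x⟫_𝕜) : IsUnit (b • (Q' ∘ₗ Q) + T) := by
  refine isUnit_of_re_inner_map_self_pos fun x hx ↦ ?_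
  have hsplit : re ⟪(b • (Q' ∘ₗ Q) + T) x, x⟫_𝕜 = re b * ‖Q x‖ ^ 2 + re ⟪T x, x⟫_𝕜 := by
    rw [LinearMap.add_apply, inner_add_left, map_add, LinearMap.smul_apply, LinearMap.comp_apply,
      inner_re_symm, inner_smul_right, hQ, inner_self_eq_norm_sq_to_K, ← ofReal_pow, re_mul_ofReal]
  have hsq : 0 ≤ re b * ‖Q x‖ ^ 2 := by positivity
  linarith [hT x hx]

theorem isUnit_smul_one_add_comp_ringInverse_comp_adjoint {G : Type*}
    [NormedAddCommGroup G] [InnerProductSpace 𝕜 G] [FiniteDimensional 𝕜 G]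
    {Q : E →ₗ[𝕜] G} {Q' : G →ₗ[𝕜] E}
    (hQ : ∀ x y, ⟪x, Q' y⟫_𝕜 = ⟪Q x, y⟫_𝕜) {c : 𝕜} (hc : 0 < re c) (hT : IsUnit T)
    (hT_nonneg : ∀ x, 0 ≤ re ⟪T x, x⟫_𝕜) :
    IsUnit (c • (1 : Module.End 𝕜 G) + Q ∘ₗ Ring.inverse T ∘ₗ Q') := by
  refine isUnit_of_re_inner_map_self_pos fun y hy ↦ ?_
  obtain ⟨w, hw⟩ : ∃ w, Ring.inverse T (Q' y) = w := ⟨_, rfl⟩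
  have hTw : Q' y = T w := (ringInverse_apply_eq_iff hT).1 hw
  have hsplit : re ⟪(c • (1 : Module.End 𝕜 G) + Q ∘ₗ Ring.inverse T ∘ₗ Q') y, y⟫_𝕜
      = re c * ‖y‖ ^ 2 + re ⟪T w, w⟫_𝕜 := by
    rw [LinearMap.add_apply, inner_add_left, map_add, LinearMap.smul_apply, Module.End.one_apply,
      inner_re_symm, inner_smul_right, inner_self_eq_norm_sq_to_K, ← ofReal_pow, re_mul_ofReal,
      LinearMap.comp_apply, LinearMap.comp_apply, hw, ← hQ, hTw, inner_re_symm w]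
  have hsq : 0 < re c * ‖y‖ ^ 2 := mul_pos hc (by positivity)
  linarith [hT_nonneg w]

/-- Here `T` is `𝔔`, the vectors `us` and `u` are `Q₋φ*` and `Q₋φ`, and `hψ` is the critical point
equation of `ψ̃`. -/
theorem stmt_5_general (hQ : ∀ x y, ⟪x, Q' y⟫_𝕜 = ⟪Q x, y⟫_𝕜) {b : 𝕜} (hb : b ≠ 0)
    (hT : IsUnit T) (hS : IsUnit (b⁻¹ • (1 : Module.End 𝕜 F) + Q ∘ₗ Ring.inverse T ∘ₗ Q'))
    (θs θ : F) (us u ψs ψ : E) (hψ : b • Q' (Q ψ) + T ψ = b • Q' θ + T u) :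
    ⟪θs - Q us, Ring.inverse (b⁻¹ • (1 : Module.End 𝕜 F) + Q ∘ₗ Ring.inverse T ∘ₗ Q')
        (θ - Q u)⟫_𝕜
      = b * ⟪θs - Q ψs, θ - Q ψ⟫_𝕜 + ⟪ψs - us, T (ψ - u)⟫_𝕜 := by
  rw [ringInverse_inv_smul_one_add_comp_apply hb hT hS hψ]
  calc ⟪θs - Q us, b • (θ - Q ψ)⟫_𝕜
      = ⟪θs - Q ψs, b • (θ - Q ψ)⟫_𝕜 + ⟪Q (ψs - us), b • (θ - Q ψ)⟫_𝕜 := by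
        rw [← inner_add_left, map_sub, sub_add_sub_cancel]
    _ = b * ⟪θs - Q ψs, θ - Q ψ⟫_𝕜 + ⟪ψs - us, T (ψ - u)⟫_𝕜 := by
        rw [inner_smul_right, ← hQ, apply_sub_eq_of_normal_equation hψ]

end InnerProduct

/-- Lemma (preparation), first statement:
`Ǎ(θ*,θ;φ*,φ) = 𝒜_eff(θ*,θ; ψ̃*, ψ̃; φ*,φ)` where
`ψ̃⁽*⁾ = (b Q*Q + 𝔔)⁻¹ (b Q* θ⁽*⁾ + 𝔔 Q₋ φ⁽*⁾)`. -/
theorem stmt_5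
    {Hm H Hp : Type*}
    [NormedAddCommGroup Hm] [InnerProductSpace ℝ Hm] [FiniteDimensional ℝ Hm]
    [NormedAddCommGroup H] [InnerProductSpace ℝ H] [FiniteDimensional ℝ H]
    [NormedAddCommGroup Hp] [InnerProductSpace ℝ Hp] [FiniteDimensional ℝ Hp]
    (Qm : Hm →ₗ[ℝ] H) (Q : H →ₗ[ℝ] Hp)
    (b : ℝ) (hb : 0 < b)
    (Qf : Module.End ℝ H) (hQfsym : Qf.IsSymmetric)
    (hQfpos : ∀ x : H, x ≠ 0 → 0 < ⟪Qf x, x⟫)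
    (Qfc : Module.End ℝ Hp)
    (hQfc : Qfc = Ring.inverse
      (b⁻¹ • (1 : Module.End ℝ Hp)
        + Q ∘ₗ Ring.inverse Qf ∘ₗ LinearMap.adjoint Q))
    (𝔄 : Hm → Hm → ℝ)
    (θs θ : Hp) (φs φ : Hm) (ψts ψt : H)
    (hψts : ψts = Ring.inverse (b • (LinearMap.adjoint Q ∘ₗ Q) + Qf)
                    (b • LinearMap.adjoint Q θs + Qf (Qm φs)))
    (hψt : ψt = Ring.inverse (b • (LinearMap.adjoint Q ∘ₗ Q) + Qf)
                  (b • LinearMap.adjoint Q θ + Qf (Qm φ))) :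
    ⟪θs - (Q ∘ₗ Qm) φs, Qfc (θ - (Q ∘ₗ Qm) φ)⟫ + 𝔄 φs φ
      = b * ⟪θs - Q ψts, θ - Q ψt⟫
        + (⟪ψts - Qm φs, Qf (ψt - Qm φ)⟫ + 𝔄 φs φ) := by
  have hQ : ∀ x y, ⟪x, LinearMap.adjoint Q y⟫ = ⟪Q x, y⟫ := LinearMap.adjoint_inner_right Q
  have hQf : IsUnit Qf := isUnit_of_re_inner_map_self_pos hQfpos
  have hM := isUnit_smul_adjoint_comp_self_add hQ hb.le hQfpos
  have hS := isUnit_smul_one_add_comp_ringInverse_comp_adjoint (c := b⁻¹) hQ (inv_pos.2 hb) hQf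
    (re_inner_map_self_nonneg_of_pos hQfpos)
  have hcritical := ((ringInverse_apply_eq_iff hM).1 hψt.symm).symm
  rw [hQfc, LinearMap.comp_apply, LinearMap.comp_apply,
    stmt_5_general hQ hb.ne' hQf hS θs θ (Qm φs) (Qm φ) ψts ψt hcritical, add_assoc]
end

section
/- Assume 𝔄 : H₋ × H₋ → ℝ is differentiable. Fix θ*, θ ∈ H₊ and for φ*, φ ∈ H₋ set ψ̃* = (b·Q*Q + 𝔔)⁻¹ (b·Q*θ* + 𝔔 Q₋ φ*) and ψ̃ = (b·Q*Q + 𝔔)⁻¹ (b·Q*θ + 𝔔 Q₋ φ). Then the gradient with respect to the second H₋-variable of the map (φ*, φ) ↦ Ǎ(θ*, θ; φ*, φ) at (φ*, φ) equals the gradient with respect to the second H₋-variable of the map (φ*, φ) ↦ 𝒜(ψ̃*, ψ̃; φ*, φ) (with ψ̃*, ψ̃ held fixed at their values at (φ*, φ)) plus Q₋* 𝔔 (b·Q*Q + 𝔔)⁻¹ applied to the gradient with respect to the variable ψ of the map (ψ*, ψ) ↦ 𝒜_eff(θ*, θ; ψ*, ψ; φ*, φ) evaluated at (ψ̃*, ψ̃).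 -/
open RealInnerProductSpace

/-!
The critical point `ψ̃*` satisfies `𝔔 (ψ̃* - Q₋ φ*) = b Q* (θ* - Q ψ̃*)` and, by the Woodbury
identity, `𝔔̌ (θ* - Q̌₋ φ*) = b (θ* - Q ψ̃*)`. Hence `𝒜_eff(θ*, θ; ψ̃*, ψ; φ*, φ) = Ǎ(θ*, θ; φ*, φ)`
for *every* `ψ` and `φ`. For fixed `φ`, `𝒜_eff` is thus constant in `ψ`, so its `ψ`-gradient
vanishes; for fixed `ψ`, `Ǎ` differs from `𝒜` by a constant in `φ`, so their `φ`-gradients agree.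
-/

section Algebra

variable {R V : Type*} [Semiring R] [AddCommMonoid V] [Module R V] {A : Module.End R V}

lemma apply_ringInverse_apply (hA : IsUnit A) (x : V) : A (Ring.inverse A x) = x := by
  rw [← Module.End.mul_apply, Ring.mul_inverse_cancel A hA, Module.End.one_apply]

lemma ringInverse_apply_apply (hA : IsUnit A) (x : V) : Ring.inverse A (A x) = x := by
  rw [← Module.End.mul_apply, Ring.inverse_mul_cancel A hA, Module.End.one_apply]

end Algebra

lemma apply_sub_eq_of_critical {R V W : Type*} [CommRing R] [AddCommGroup V] [Module R V]
    [AddCommGroup W] [Module R W] {b : R} {A : Module.End R V} {P : W →ₗ[R] V} {Q : V →ₗ[R] W}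
    {θ : W} {ψ ξ : V}
    (hψ : (b • (P ∘ₗ Q) + A) ψ = b • P θ + A ξ) :
    A (ψ - ξ) = P (b • (θ - Q ψ)) := by
  simp only [LinearMap.add_apply, LinearMap.smul_apply, LinearMap.comp_apply] at hψ
  rw [map_sub, map_smul, map_sub, smul_sub, sub_eq_sub_iff_add_eq_add, add_comm, hψ]

section Woodbury

variable {K V W : Type*} [Field K] [AddCommGroup V] [Module K V] [AddCommGroup W] [Module K W]
  {b : K} {A : Module.End K V} {P : W →ₗ[K] V} {Q : V →ₗ[K] W}

lemma woodbury_mul_cancel (hb : b ≠ 0) (hA : IsUnit A) (hS : IsUnit (b • (P ∘ₗ Q) + A)) :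
    (b⁻¹ • (1 : Module.End K W) + Q ∘ₗ Ring.inverse A ∘ₗ P) *
      (b • 1 - b ^ 2 • (Q ∘ₗ Ring.inverse (b • (P ∘ₗ Q) + A) ∘ₗ P)) = 1 := by
  ext x
  set z := Ring.inverse (b • (P ∘ₗ Q) + A) (P x)
  have hPx : P x = b • P (Q z) + A z := (apply_ringInverse_apply hS (P x)).symm
  have hPy : P (b • x - b ^ 2 • Q z) = b • A z := by
    rw [map_sub, map_smul, map_smul, hPx]
    module
  calc b⁻¹ • (b • x - b ^ 2 • Q z) + Q (Ring.inverse A (P (b • x - b ^ 2 • Q z)))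
    _ = b⁻¹ • (b • x - b ^ 2 • Q z) + b • Q z := by
      rw [hPy, map_smul, ringInverse_apply_apply hA, map_smul]
    _ = x := by
      match_scalars <;> field_simp
      ring

lemma woodbury_cancel_mul (hb : b ≠ 0) (hA : IsUnit A) (hS : IsUnit (b • (P ∘ₗ Q) + A)) :
    (b • 1 - b ^ 2 • (Q ∘ₗ Ring.inverse (b • (P ∘ₗ Q) + A) ∘ₗ P)) *
      (b⁻¹ • (1 : Module.End K W) + Q ∘ₗ Ring.inverse A ∘ₗ P) = 1 := by
  ext x
  set a := Ring.inverse A (P x)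
  have hPx : P x = A a := (apply_ringInverse_apply hA (P x)).symm
  have hPy : P (b⁻¹ • x + Q a) = b⁻¹ • (b • (P ∘ₗ Q) + A) a := by
    rw [map_add, map_smul, hPx, LinearMap.add_apply, smul_add, LinearMap.smul_apply,
      inv_smul_smul₀ hb, LinearMap.comp_apply, add_comm]
  calc b • (b⁻¹ • x + Q a) -
        b ^ 2 • Q (Ring.inverse (b • (P ∘ₗ Q) + A) (P (b⁻¹ • x + Q a)))
    _ = b • (b⁻¹ • x + Q a) - b ^ 2 • b⁻¹ • Q a := by
      rw [hPy, map_smul, ringInverse_apply_apply hS, map_smul]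
    _ = x := by
      match_scalars <;> field_simp
      ring

theorem ringInverse_inv_smul_one_add_comp (hb : b ≠ 0) (hA : IsUnit A)
    (hS : IsUnit (b • (P ∘ₗ Q) + A)) :
    Ring.inverse (b⁻¹ • (1 : Module.End K W) + Q ∘ₗ Ring.inverse A ∘ₗ P) =
      b • 1 - b ^ 2 • (Q ∘ₗ Ring.inverse (b • (P ∘ₗ Q) + A) ∘ₗ P) :=
  Ring.inverse_unit ⟨_, _, woodbury_mul_cancel hb hA hS, woodbury_cancel_mul hb hA hS⟩

lemma ringInverse_apply_sub_eq_of_critical (hb : b ≠ 0) (hA : IsUnit A)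
    (hS : IsUnit (b • (P ∘ₗ Q) + A)) {θ : W} {ψ ξ : V}
    (hψ : (b • (P ∘ₗ Q) + A) ψ = b • P θ + A ξ) :
    Ring.inverse (b⁻¹ • (1 : Module.End K W) + Q ∘ₗ Ring.inverse A ∘ₗ P) (θ - Q ξ) =
      b • (θ - Q ψ) := by
  have hPθ : b • P (θ - Q ξ) = (b • (P ∘ₗ Q) + A) (ψ - ξ) := by
    rw [map_sub _ ψ, hψ]
    simp only [LinearMap.add_apply, LinearMap.smul_apply, LinearMap.comp_apply, map_sub]
    module
  have hSinv : b • Ring.inverse (b • (P ∘ₗ Q) + A) (P (θ - Q ξ)) = ψ - ξ := by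
    rw [← map_smul, hPθ, ringInverse_apply_apply hS]
  rw [ringInverse_inv_smul_one_add_comp hb hA hS]
  calc b • (θ - Q ξ) - b ^ 2 • Q (Ring.inverse (b • (P ∘ₗ Q) + A) (P (θ - Q ξ)))
    _ = b • (θ - Q ξ) - b • Q (ψ - ξ) := by
      rw [pow_two, mul_smul, ← map_smul Q, hSinv]
    _ = b • (θ - Q ψ) := by
      rw [map_sub]
      module

end Woodbury

section InnerProduct

variable {𝕜 E : Type*} [RCLike 𝕜] [NormedAddCommGroup E] [InnerProductSpace 𝕜 E]
  [FiniteDimensional 𝕜 E]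

lemma isUnit_of_inner_apply_self_ne_zero {T : Module.End 𝕜 E}
    (hT : ∀ x, x ≠ 0 → inner 𝕜 (T x) x ≠ 0) : IsUnit T := by
  rw [LinearMap.isUnit_iff_ker_eq_bot, LinearMap.ker_eq_bot']
  intro x hx
  by_contra hne
  exact hT x hne (by rw [hx, inner_zero_left])

lemma isSymmetric_ringInverse {T : Module.End 𝕜 E} (hT : T.IsSymmetric) :
    (Ring.inverse T).IsSymmetric := by
  rw [LinearMap.isSymmetric_iff_isSelfAdjoint] at hT ⊢
  exact hT.ringInverse

end InnerProduct

section Action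

variable {E F : Type*}
  [NormedAddCommGroup E] [InnerProductSpace ℝ E] [FiniteDimensional ℝ E]
  [NormedAddCommGroup F] [InnerProductSpace ℝ F] [FiniteDimensional ℝ F]
  {b : ℝ} {A : Module.End ℝ E} {Q : E →ₗ[ℝ] F}

lemma isUnit_smul_adjoint_comp_self_add_s6 (hb : 0 ≤ b) (hA : ∀ x, x ≠ 0 → 0 < ⟪A x, x⟫) :
    IsUnit (b • (LinearMap.adjoint Q ∘ₗ Q) + A) := by
  refine isUnit_of_inner_apply_self_ne_zero (𝕜 := ℝ) fun x hx => ne_of_gt ?_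
  calc 0 < b * ⟪Q x, Q x⟫ + ⟪A x, x⟫ :=
        add_pos_of_nonneg_of_pos (mul_nonneg hb real_inner_self_nonneg) (hA x hx)
    _ = ⟪(b • (LinearMap.adjoint Q ∘ₗ Q) + A) x, x⟫ := by
        rw [LinearMap.add_apply, inner_add_left, LinearMap.smul_apply, real_inner_smul_left,
          LinearMap.comp_apply, LinearMap.adjoint_inner_left]

lemma isSymmetric_inv_smul_one_add_conj (hA : A.IsSymmetric) :
    (b⁻¹ • (1 : Module.End ℝ F) + Q ∘ₗ Ring.inverse A ∘ₗ LinearMap.adjoint Q).IsSymmetric :=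
  (LinearMap.IsSymmetric.one.smul (conj_trivial _)).add
    ((isSymmetric_ringInverse hA).conj_adjoint Q)

theorem inner_ringInverse_eq_of_critical (hb : b ≠ 0) (hAsym : A.IsSymmetric) (hA : IsUnit A)
    (hS : IsUnit (b • (LinearMap.adjoint Q ∘ₗ Q) + A)) {θs : F} {ψs ξs : E}
    (hψs : (b • (LinearMap.adjoint Q ∘ₗ Q) + A) ψs = b • LinearMap.adjoint Q θs + A ξs)
    (θ : F) (ψ ξ : E) :
    ⟪θs - Q ξs, Ring.inverse
        (b⁻¹ • (1 : Module.End ℝ F) + Q ∘ₗ Ring.inverse A ∘ₗ LinearMap.adjoint Q) (θ - Q ξ)⟫ =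
      b * ⟪θs - Q ψs, θ - Q ψ⟫ + ⟪ψs - ξs, A (ψ - ξ)⟫ := by
  have hsplit : θ - Q ξ = (θ - Q ψ) + Q (ψ - ξ) := by
    rw [map_sub]
    abel
  calc _ = ⟪b • (θs - Q ψs), θ - Q ξ⟫ := by
        rw [← isSymmetric_ringInverse (isSymmetric_inv_smul_one_add_conj hAsym),
          ringInverse_apply_sub_eq_of_critical hb hA hS hψs]
    _ = b * ⟪θs - Q ψs, θ - Q ψ⟫ + ⟪b • (θs - Q ψs), Q (ψ - ξ)⟫ := by
        rw [hsplit, inner_add_right, real_inner_smul_left]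
    _ = b * ⟪θs - Q ψs, θ - Q ψ⟫ + ⟪ψs - ξs, A (ψ - ξ)⟫ := by
        rw [← LinearMap.adjoint_inner_left, ← apply_sub_eq_of_critical hψs, hAsym]

end Action

section Gradient

lemma hasGradientAt_const_add {𝕜 E : Type*} [RCLike 𝕜] [NormedAddCommGroup E]
    [InnerProductSpace 𝕜 E] [CompleteSpace E] {f : E → 𝕜} {f' x : E} (hf : HasGradientAt f f' x)
    (c : 𝕜) : HasGradientAt (fun y => c + f y) f' x :=
  hasGradientAt_iff_hasFDerivAt.mpr (hf.hasFDerivAt.const_add c)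

lemma differentiableAt_inner_apply_sub {E F G : Type*}
    [NormedAddCommGroup E] [NormedSpace ℝ E] [FiniteDimensional ℝ E] [AddCommGroup F] [Module ℝ F]
    [NormedAddCommGroup G] [InnerProductSpace ℝ G]
    (A : F →ₗ[ℝ] G) (L : E →ₗ[ℝ] F) (u : G) (v : F) (x : E) :
    DifferentiableAt ℝ (fun y => ⟪u, A (v - L y)⟫) x := by
  simp only [map_sub]
  exact (differentiableAt_const u).inner ℝ
    ((A ∘ₗ L).toContinuousLinearMap.differentiableAt.const_sub (A v))

end Gradient

theorem stmt_6_general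
    {Hm H Hp : Type*}
    [NormedAddCommGroup Hm] [InnerProductSpace ℝ Hm] [FiniteDimensional ℝ Hm]
    [NormedAddCommGroup H] [InnerProductSpace ℝ H] [FiniteDimensional ℝ H]
    [NormedAddCommGroup Hp] [InnerProductSpace ℝ Hp] [FiniteDimensional ℝ Hp]
    {Qm : Hm →ₗ[ℝ] H} {Q : H →ₗ[ℝ] Hp}
    {b : ℝ} (hb : b ≠ 0)
    {Qf : Module.End ℝ H} (hQfsym : Qf.IsSymmetric) (hQf : IsUnit Qf)
    (hS : IsUnit (b • (LinearMap.adjoint Q ∘ₗ Q) + Qf))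
    {Qfc : Module.End ℝ Hp}
    (hQfc : Qfc = Ring.inverse
      (b⁻¹ • (1 : Module.End ℝ Hp)
        + Q ∘ₗ Ring.inverse Qf ∘ₗ LinearMap.adjoint Q))
    {𝔄 : Hm → Hm → ℝ} {φs φ : Hm} (h𝔄 : DifferentiableAt ℝ (𝔄 φs) φ)
    {θs : Hp} {ψts : H}
    (hψts : ψts = Ring.inverse (b • (LinearMap.adjoint Q ∘ₗ Q) + Qf)
                    (b • LinearMap.adjoint Q θs + Qf (Qm φs)))
    (θ : Hp) (ψt : H) :
    gradient (fun φ' : Hm =>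
        ⟪θs - (Q ∘ₗ Qm) φs, Qfc (θ - (Q ∘ₗ Qm) φ')⟫ + 𝔄 φs φ') φ
      = gradient (fun φ' : Hm =>
          ⟪ψts - Qm φs, Qf (ψt - Qm φ')⟫ + 𝔄 φs φ') φ
        + (LinearMap.adjoint Qm ∘ₗ Qf
            ∘ₗ Ring.inverse (b • (LinearMap.adjoint Q ∘ₗ Q) + Qf))
          (gradient (fun ψ' : H =>
            b * ⟪θs - Q ψts, θ - Q ψ'⟫
              + (⟪ψts - Qm φs, Qf (ψ' - Qm φ)⟫ + 𝔄 φs φ)) ψt) := by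
  have hψts_crit : (b • (LinearMap.adjoint Q ∘ₗ Q) + Qf) ψts =
      b • LinearMap.adjoint Q θs + Qf (Qm φs) := by
    rw [hψts, apply_ringInverse_apply hS]
  have hform (ψ : H) (φ' : Hm) : ⟪θs - (Q ∘ₗ Qm) φs, Qfc (θ - (Q ∘ₗ Qm) φ')⟫ =
      b * ⟪θs - Q ψts, θ - Q ψ⟫ + ⟪ψts - Qm φs, Qf (ψ - Qm φ')⟫ := by
    subst hQfc
    exact inner_ringInverse_eq_of_critical hb hQfsym hQf hS hψts_crit θ ψ (Qm φ')
  have h𝒜 : DifferentiableAt ℝ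
      (fun φ' : Hm => ⟪ψts - Qm φs, Qf (ψt - Qm φ')⟫ + 𝔄 φs φ') φ :=
    (differentiableAt_inner_apply_sub Qf Qm _ _ φ).add h𝔄
  have hgradψ : gradient (fun ψ' : H => b * ⟪θs - Q ψts, θ - Q ψ'⟫ +
      (⟪ψts - Qm φs, Qf (ψ' - Qm φ)⟫ + 𝔄 φs φ)) ψt = 0 := by
    simp only [← add_assoc, ← hform, gradient_fun_const]
  rw [hgradψ, map_zero, add_zero]
  simp only [hform ψt, add_assoc]
  exact (hasGradientAt_const_add h𝒜.hasGradientAt _).gradient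

/-- Lemma (preparation), gradient identity:
`∇_φ Ǎ(θ*,θ;φ*,φ) = ∇_φ 𝒜(ψ̃*,ψ̃;φ*,φ) + Q₋* 𝔔 (b Q*Q + 𝔔)⁻¹ [∇_ψ 𝒜_eff(θ*,θ;ψ̃*,ψ̃;φ*,φ)]`. -/
theorem stmt_6
    {Hm H Hp : Type*}
    [NormedAddCommGroup Hm] [InnerProductSpace ℝ Hm] [FiniteDimensional ℝ Hm]
    [NormedAddCommGroup H] [InnerProductSpace ℝ H] [FiniteDimensional ℝ H]
    [NormedAddCommGroup Hp] [InnerProductSpace ℝ Hp] [FiniteDimensional ℝ Hp]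
    (Qm : Hm →ₗ[ℝ] H) (Q : H →ₗ[ℝ] Hp)
    (b : ℝ) (hb : 0 < b)
    (Qf : Module.End ℝ H) (hQfsym : Qf.IsSymmetric)
    (hQfpos : ∀ x : H, x ≠ 0 → 0 < ⟪Qf x, x⟫)
    (Qfc : Module.End ℝ Hp)
    (hQfc : Qfc = Ring.inverse
      (b⁻¹ • (1 : Module.End ℝ Hp)
        + Q ∘ₗ Ring.inverse Qf ∘ₗ LinearMap.adjoint Q))
    (𝔄 : Hm → Hm → ℝ)
    (h𝔄 : Differentiable ℝ (fun p : Hm × Hm => 𝔄 p.1 p.2))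
    (θs θ : Hp) (φs φ : Hm) (ψts ψt : H)
    (hψts : ψts = Ring.inverse (b • (LinearMap.adjoint Q ∘ₗ Q) + Qf)
                    (b • LinearMap.adjoint Q θs + Qf (Qm φs)))
    (hψt : ψt = Ring.inverse (b • (LinearMap.adjoint Q ∘ₗ Q) + Qf)
                  (b • LinearMap.adjoint Q θ + Qf (Qm φ))) :
    gradient (fun φ' : Hm =>
        ⟪θs - (Q ∘ₗ Qm) φs, Qfc (θ - (Q ∘ₗ Qm) φ')⟫ + 𝔄 φs φ') φ
      = gradient (fun φ' : Hm =>
          ⟪ψts - Qm φs, Qf (ψt - Qm φ')⟫ + 𝔄 φs φ') φ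
        + (LinearMap.adjoint Qm ∘ₗ Qf
            ∘ₗ Ring.inverse (b • (LinearMap.adjoint Q ∘ₗ Q) + Qf))
          (gradient (fun ψ' : H =>
            b * ⟪θs - Q ψts, θ - Q ψ'⟫
              + (⟪ψts - Qm φs, Qf (ψ' - Qm φ)⟫ + 𝔄 φs φ)) ψt) := by
  have hQf : IsUnit Qf := isUnit_of_inner_apply_self_ne_zero fun x hx => (hQfpos x hx).ne'
  exact stmt_6_general hb.ne' hQfsym hQf (isUnit_smul_adjoint_comp_self_add_s6 hb.le hQfpos) hQfc
    (h𝔄.comp (differentiable_const φs |>.prodMk differentiable_id) φ) hψts θ ψt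
end

section
/- Assume in addition that D is invertible. Then the operator S⁻¹ − Q₋* 𝔔 (𝔔 + b·Q*Q)⁻¹ 𝔔 Q₋ on H₋ is invertible and its inverse equals Š; equivalently, Š⁻¹ = S⁻¹ − Q₋* 𝔔 (𝔔 + b·Q*Q)⁻¹ 𝔔 Q₋, where S = (D + Q₋*𝔔Q₋)⁻¹ and Š = (D + Q̌₋*𝔔̌Q̌₋)⁻¹. -/
open RealInnerProductSpace

/-!
Let `C = b`, `A = 𝔔`, `P = Q*`, `N = C⁻¹ + Q A⁻¹ P` and `M = A + P C Q`. Multiplying out gives the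
push-through identities `N C Q = Q A⁻¹ M` and `P C N = M A⁻¹ P`. They show that `N` is invertible
when `M` is (and `M` is positive definite here), and then `N⁻¹ Q = C Q M⁻¹ A`, so
`P N⁻¹ Q = (M - A) M⁻¹ A = A - A M⁻¹ A`. Sandwiching this between `Q₋*` and `Q₋` and adding `D`
gives the formula for `Š⁻¹`.
-/

section Woodbury

variable {R V W : Type*} [Ring R] [AddCommGroup V] [Module R V] [AddCommGroup W] [Module R W]
  {A : Module.End R V} {C : Module.End R W} {P : W →ₗ[R] V} {Q : V →ₗ[R] W}

theorem inverse_add_comp_inverse_comp_comp (hA : IsUnit A) (hC : IsUnit C) :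
    (Ring.inverse C + Q ∘ₗ Ring.inverse A ∘ₗ P) ∘ₗ C ∘ₗ Q =
      Q ∘ₗ Ring.inverse A ∘ₗ (A + P ∘ₗ C ∘ₗ Q) :=
  calc (Ring.inverse C + Q ∘ₗ Ring.inverse A ∘ₗ P) ∘ₗ C ∘ₗ Q
    _ = (Ring.inverse C * C) ∘ₗ Q + Q ∘ₗ Ring.inverse A ∘ₗ P ∘ₗ C ∘ₗ Q := LinearMap.add_comp ..
    _ = Q ∘ₗ (Ring.inverse A * A) + Q ∘ₗ Ring.inverse A ∘ₗ P ∘ₗ C ∘ₗ Q := by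
      rw [Ring.inverse_mul_cancel C hC, Ring.inverse_mul_cancel A hA]; rfl
    _ = Q ∘ₗ Ring.inverse A ∘ₗ (A + P ∘ₗ C ∘ₗ Q) := by
      simp only [LinearMap.comp_add, Module.End.mul_eq_comp]

theorem comp_comp_inverse_add_comp_inverse (hA : IsUnit A) (hC : IsUnit C) :
    P ∘ₗ C ∘ₗ (Ring.inverse C + Q ∘ₗ Ring.inverse A ∘ₗ P) =
      (A + P ∘ₗ C ∘ₗ Q) ∘ₗ Ring.inverse A ∘ₗ P :=
  calc P ∘ₗ C ∘ₗ (Ring.inverse C + Q ∘ₗ Ring.inverse A ∘ₗ P)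
    _ = P ∘ₗ (C * Ring.inverse C) + P ∘ₗ C ∘ₗ Q ∘ₗ Ring.inverse A ∘ₗ P := by
      simp only [LinearMap.comp_add, Module.End.mul_eq_comp]
    _ = (A * Ring.inverse A) ∘ₗ P + P ∘ₗ C ∘ₗ Q ∘ₗ Ring.inverse A ∘ₗ P := by
      rw [Ring.mul_inverse_cancel C hC, Ring.mul_inverse_cancel A hA]; rfl
    _ = (A + P ∘ₗ C ∘ₗ Q) ∘ₗ Ring.inverse A ∘ₗ P := by
      rw [LinearMap.add_comp]; rfl

theorem isUnit_inverse_add_comp_inverse_comp (hA : IsUnit A) (hC : IsUnit C)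
    (hM : IsUnit (A + P ∘ₗ C ∘ₗ Q)) : IsUnit (Ring.inverse C + Q ∘ₗ Ring.inverse A ∘ₗ P) := by
  have hNCQ := inverse_add_comp_inverse_comp_comp (P := P) (Q := Q) hA hC
  have hPCN := comp_comp_inverse_add_comp_inverse (P := P) (Q := Q) hA hC
  set M := A + P ∘ₗ C ∘ₗ Q
  set N := Ring.inverse C + Q ∘ₗ Ring.inverse A ∘ₗ P with hN
  have hNC : N * C = 1 + Q ∘ₗ Ring.inverse A ∘ₗ P ∘ₗ C := by
    rw [hN, add_mul, Ring.inverse_mul_cancel C hC]; rfl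
  have hCN : C * N = 1 + C ∘ₗ Q ∘ₗ Ring.inverse A ∘ₗ P := by
    rw [hN, mul_add, Ring.mul_inverse_cancel C hC]; rfl
  refine isUnit_iff_exists.2 ⟨C - C ∘ₗ Q ∘ₗ Ring.inverse M ∘ₗ P ∘ₗ C, ?_, ?_⟩
  · calc N * (C - C ∘ₗ Q ∘ₗ Ring.inverse M ∘ₗ P ∘ₗ C)
        = N * C - (N ∘ₗ C ∘ₗ Q) ∘ₗ Ring.inverse M ∘ₗ P ∘ₗ C := mul_sub ..
      _ = N * C - Q ∘ₗ Ring.inverse A ∘ₗ (M * Ring.inverse M) ∘ₗ P ∘ₗ C := by rw [hNCQ]; rfl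
      _ = 1 := by rw [Ring.mul_inverse_cancel M hM, hNC]; exact add_sub_cancel_right ..
  · calc (C - C ∘ₗ Q ∘ₗ Ring.inverse M ∘ₗ P ∘ₗ C) * N
        = C * N - C ∘ₗ Q ∘ₗ Ring.inverse M ∘ₗ P ∘ₗ C ∘ₗ N := sub_mul ..
      _ = C * N - C ∘ₗ Q ∘ₗ (Ring.inverse M * M) ∘ₗ Ring.inverse A ∘ₗ P := by rw [hPCN]; rfl
      _ = 1 := by rw [Ring.inverse_mul_cancel M hM, hCN]; exact add_sub_cancel_right ..

theorem inverse_inverse_add_comp_inverse_comp_comp (hA : IsUnit A) (hC : IsUnit C)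
    (hM : IsUnit (A + P ∘ₗ C ∘ₗ Q)) :
    Ring.inverse (Ring.inverse C + Q ∘ₗ Ring.inverse A ∘ₗ P) ∘ₗ Q =
      C ∘ₗ Q ∘ₗ Ring.inverse (A + P ∘ₗ C ∘ₗ Q) ∘ₗ A := by
  have hNCQ := inverse_add_comp_inverse_comp_comp (P := P) (Q := Q) hA hC
  have hN := isUnit_inverse_add_comp_inverse_comp hA hC hM
  set M := A + P ∘ₗ C ∘ₗ Q
  set N := Ring.inverse C + Q ∘ₗ Ring.inverse A ∘ₗ P
  calc Ring.inverse N ∘ₗ Q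
      = Ring.inverse N ∘ₗ Q ∘ₗ (Ring.inverse A * (M * Ring.inverse M) * A) := by
        rw [Ring.mul_inverse_cancel M hM, mul_one, Ring.inverse_mul_cancel A hA]; rfl
    _ = Ring.inverse N ∘ₗ (Q ∘ₗ Ring.inverse A ∘ₗ M) ∘ₗ Ring.inverse M ∘ₗ A := rfl
    _ = (Ring.inverse N * N) ∘ₗ C ∘ₗ Q ∘ₗ Ring.inverse M ∘ₗ A := by rw [← hNCQ]; rfl
    _ = C ∘ₗ Q ∘ₗ Ring.inverse M ∘ₗ A := by rw [Ring.inverse_mul_cancel N hN]; rfl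

theorem comp_inverse_inverse_add_comp_inverse_comp_comp (hA : IsUnit A) (hC : IsUnit C)
    (hM : IsUnit (A + P ∘ₗ C ∘ₗ Q)) :
    P ∘ₗ Ring.inverse (Ring.inverse C + Q ∘ₗ Ring.inverse A ∘ₗ P) ∘ₗ Q =
      A - A ∘ₗ Ring.inverse (A + P ∘ₗ C ∘ₗ Q) ∘ₗ A := by
  rw [inverse_inverse_add_comp_inverse_comp_comp hA hC hM]
  set M := A + P ∘ₗ C ∘ₗ Q with hM_def
  calc (P ∘ₗ C ∘ₗ Q) ∘ₗ Ring.inverse M ∘ₗ A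
      = (M - A) * (Ring.inverse M * A) := by rw [hM_def, add_sub_cancel_left]; rfl
    _ = A - A * (Ring.inverse M * A) := by rw [sub_mul, Ring.mul_inverse_cancel_left M A hM]

end Woodbury

section InnerProductSpace

variable {𝕜 E : Type*} [RCLike 𝕜] [NormedAddCommGroup E] [InnerProductSpace 𝕜 E]
  [FiniteDimensional 𝕜 E] {A B : Module.End 𝕜 E}

theorem isUnit_of_re_inner_pos (hA : ∀ x ≠ 0, 0 < RCLike.re (inner 𝕜 (A x) x)) : IsUnit A := by
  refine (LinearMap.isUnit_iff_ker_eq_bot A).2 (LinearMap.ker_eq_bot'.2 fun x hAx ↦ ?_)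
  by_contra hx
  simpa [hAx] using hA x hx

theorem isUnit_add_of_re_inner_pos_of_isPositive
    (hA : ∀ x ≠ 0, 0 < RCLike.re (inner 𝕜 (A x) x)) (hB : B.IsPositive) : IsUnit (A + B) :=
  isUnit_of_re_inner_pos fun x hx ↦ by
    rw [LinearMap.add_apply, inner_add_left, map_add]
    exact add_pos_of_pos_of_nonneg (hA x hx) (hB.re_inner_nonneg_left x)

end InnerProductSpace

theorem stmt_14_general {R U V W : Type*} [Ring R] [AddCommGroup U] [Module R U]
    [AddCommGroup V] [Module R V] [AddCommGroup W] [Module R W]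
    (Qm : U →ₗ[R] V) (Pm : V →ₗ[R] U) (Q : V →ₗ[R] W) (P : W →ₗ[R] V)
    (C : Module.End R W) (hC : IsUnit C) (A : Module.End R V) (hA : IsUnit A)
    (hM : IsUnit (A + P ∘ₗ C ∘ₗ Q))
    (Ac : Module.End R W) (hAc : Ac = Ring.inverse (Ring.inverse C + Q ∘ₗ Ring.inverse A ∘ₗ P))
    (D : Module.End R U) (hD : IsUnit (D + Pm ∘ₗ A ∘ₗ Qm))
    (hDc : IsUnit (D + (Pm ∘ₗ P) ∘ₗ Ac ∘ₗ (Q ∘ₗ Qm)))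
    (S : Module.End R U) (hS : S = Ring.inverse (D + Pm ∘ₗ A ∘ₗ Qm))
    (Sc : Module.End R U) (hSc : Sc = Ring.inverse (D + (Pm ∘ₗ P) ∘ₗ Ac ∘ₗ (Q ∘ₗ Qm))) :
    IsUnit (Ring.inverse S - Pm ∘ₗ A ∘ₗ Ring.inverse (A + P ∘ₗ C ∘ₗ Q) ∘ₗ A ∘ₗ Qm) ∧
    Ring.inverse (Ring.inverse S - Pm ∘ₗ A ∘ₗ Ring.inverse (A + P ∘ₗ C ∘ₗ Q) ∘ₗ A ∘ₗ Qm) = Sc ∧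
    Ring.inverse Sc =
      Ring.inverse S - Pm ∘ₗ A ∘ₗ Ring.inverse (A + P ∘ₗ C ∘ₗ Q) ∘ₗ A ∘ₗ Qm := by
  have inverse_S_sub :
      Ring.inverse S - Pm ∘ₗ A ∘ₗ Ring.inverse (A + P ∘ₗ C ∘ₗ Q) ∘ₗ A ∘ₗ Qm =
        D + (Pm ∘ₗ P) ∘ₗ Ac ∘ₗ (Q ∘ₗ Qm) :=
    calc Ring.inverse S - Pm ∘ₗ A ∘ₗ Ring.inverse (A + P ∘ₗ C ∘ₗ Q) ∘ₗ A ∘ₗ Qm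
        = D + Pm ∘ₗ (A - A ∘ₗ Ring.inverse (A + P ∘ₗ C ∘ₗ Q) ∘ₗ A) ∘ₗ Qm := by
          rw [hS, Ring.inverse_inverse hD, add_sub_assoc, LinearMap.sub_comp, LinearMap.comp_sub]
          rfl
      _ = D + Pm ∘ₗ (P ∘ₗ Ac ∘ₗ Q) ∘ₗ Qm := by
          rw [hAc, comp_inverse_inverse_add_comp_inverse_comp_comp hA hC hM]
  rw [inverse_S_sub, hSc]
  exact ⟨hDc, rfl, Ring.inverse_inverse hDc⟩


/-- Remark, part (c), first representation:
`Š⁻¹ = S⁻¹ - Q₋* 𝔔 (𝔔 + b Q*Q)⁻¹ 𝔔 Q₋`, i.e. `S⁻¹ - Q₋* 𝔔 (𝔔 + b Q*Q)⁻¹ 𝔔 Q₋`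
is invertible with inverse `Š`. -/
theorem stmt_14
    {Hm H Hp : Type*}
    [NormedAddCommGroup Hm] [InnerProductSpace ℝ Hm] [FiniteDimensional ℝ Hm]
    [NormedAddCommGroup H] [InnerProductSpace ℝ H] [FiniteDimensional ℝ H]
    [NormedAddCommGroup Hp] [InnerProductSpace ℝ Hp] [FiniteDimensional ℝ Hp]
    (Qm : Hm →ₗ[ℝ] H) (Q : H →ₗ[ℝ] Hp)
    (b : ℝ) (hb : 0 < b)
    (Qf : Module.End ℝ H) (hQfsym : Qf.IsSymmetric)
    (hQfpos : ∀ x : H, x ≠ 0 → 0 < ⟪Qf x, x⟫)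
    (Qfc : Module.End ℝ Hp)
    (hQfc : Qfc = Ring.inverse
      (b⁻¹ • (1 : Module.End ℝ Hp)
        + Q ∘ₗ Ring.inverse Qf ∘ₗ LinearMap.adjoint Q))
    (D : Module.End ℝ Hm)
    (hDQ : IsUnit (D + LinearMap.adjoint Qm ∘ₗ Qf ∘ₗ Qm))
    (hDQc : IsUnit (D + LinearMap.adjoint (Q ∘ₗ Qm) ∘ₗ Qfc ∘ₗ (Q ∘ₗ Qm)))
    (S : Module.End ℝ Hm)
    (hS : S = Ring.inverse (D + LinearMap.adjoint Qm ∘ₗ Qf ∘ₗ Qm))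
    (Sc : Module.End ℝ Hm)
    (hSc : Sc = Ring.inverse (D + LinearMap.adjoint (Q ∘ₗ Qm) ∘ₗ Qfc ∘ₗ (Q ∘ₗ Qm)))
    (hD : IsUnit D) :
    IsUnit (Ring.inverse S
        - LinearMap.adjoint Qm ∘ₗ Qf
            ∘ₗ Ring.inverse (Qf + b • (LinearMap.adjoint Q ∘ₗ Q))
            ∘ₗ Qf ∘ₗ Qm) ∧
    Ring.inverse (Ring.inverse S
        - LinearMap.adjoint Qm ∘ₗ Qf
            ∘ₗ Ring.inverse (Qf + b • (LinearMap.adjoint Q ∘ₗ Q))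
            ∘ₗ Qf ∘ₗ Qm)
      = Sc ∧
    Ring.inverse Sc
      = Ring.inverse S
        - LinearMap.adjoint Qm ∘ₗ Qf
            ∘ₗ Ring.inverse (Qf + b • (LinearMap.adjoint Q ∘ₗ Q))
            ∘ₗ Qf ∘ₗ Qm := by
  let C : (Module.End ℝ Hp)ˣ := Units.mk0 b hb.ne' • 1
  have hC : Ring.inverse (C : Module.End ℝ Hp) = b⁻¹ • 1 := Ring.inverse_unit C
  have hCQ : b • (LinearMap.adjoint Q ∘ₗ Q) = LinearMap.adjoint Q ∘ₗ ↑C ∘ₗ Q :=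
    (LinearMap.comp_smul ..).symm
  have hM : IsUnit (Qf + b • (LinearMap.adjoint Q ∘ₗ Q)) :=
    isUnit_add_of_re_inner_pos_of_isPositive hQfpos
      ((LinearMap.isPositive_adjoint_comp_self Q).smul_of_nonneg hb.le)
  rw [hCQ] at hM ⊢
  rw [← hC] at hQfc
  rw [LinearMap.adjoint_comp] at hDQc hSc
  exact stmt_14_general Qm _ Q _ C C.isUnit Qf (isUnit_of_re_inner_pos hQfpos)
    hM Qfc hQfc D hDQ hDQc S hS Sc hSc
end

section
/- One has the operator identity from H₊ to H₋: Q̌₋* 𝔔̌ = b·Q₋* 𝔔 (b·Q*Q + 𝔔)⁻¹ Q*, where 𝔔̌ = ((1/b)·id_{H₊} + Q 𝔔⁻¹ Q*)⁻¹ and Q̌₋ = Q ∘ Q₋. -/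
open RealInnerProductSpace

/-!
Write `S = V C U + A` and `D = C⁻¹ + U A⁻¹ V`. Expanding gives `S A⁻¹ V = V C D`, so multiplying by
the inverses of `S` and `D` yields `V D⁻¹ = A S⁻¹ V C`. Moreover `D` is invertible exactly when `S`
is, because `1 + X Y` is invertible exactly when `1 + Y X` is. Take `U = Q`, `V = Q*`, `C = b`,
`A = 𝔔` and compose with `Q₋*`: here `S = b Q*Q + 𝔔` is injective because `re ⟪S x, x⟫ > 0` for
`x ≠ 0`, hence invertible in finite dimension.
-/

section PushThrough

variable {R M N : Type*} [Ring R] [AddCommGroup M] [Module R M] [AddCommGroup N] [Module R N]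

theorem units_apply_inv_apply (T : (Module.End R M)ˣ) (m : M) : T.1 (T⁻¹.1 m) = m :=
  LinearMap.congr_fun T.mul_inv m

theorem units_inv_apply_apply (T : (Module.End R M)ˣ) (m : M) : T⁻¹.1 (T.1 m) = m :=
  LinearMap.congr_fun T.inv_mul m

theorem isUnit_one_add_comp_of_swap {X : N →ₗ[R] M} {Y : M →ₗ[R] N}
    (h : IsUnit (1 + X ∘ₗ Y : Module.End R M)) : IsUnit (1 + Y ∘ₗ X : Module.End R N) := by
  obtain ⟨T, hT⟩ := h
  have comp_inv (m : M) : X (Y (T⁻¹.1 m)) = m - T⁻¹.1 m :=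
    eq_sub_of_add_eq' (by simpa [hT] using units_apply_inv_apply T m)
  have inv_comp (m : M) : T⁻¹.1 (X (Y m)) = m - T⁻¹.1 m :=
    eq_sub_of_add_eq' (by simpa [hT] using units_inv_apply_apply T m)
  refine ⟨⟨1 + Y ∘ₗ X, 1 - Y ∘ₗ T⁻¹.1 ∘ₗ X, ?_, ?_⟩, rfl⟩
  · ext n
    simp [comp_inv]
  · ext n
    simp [inv_comp]

theorem isUnit_one_add_comp_comm (X : N →ₗ[R] M) (Y : M →ₗ[R] N) :
    IsUnit (1 + X ∘ₗ Y : Module.End R M) ↔ IsUnit (1 + Y ∘ₗ X : Module.End R N) :=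
  ⟨isUnit_one_add_comp_of_swap, isUnit_one_add_comp_of_swap⟩

theorem ringInverse_comp_eq_comp_ringInverse {S : Module.End R M} {D : Module.End R N}
    {W W' : N →ₗ[R] M} (hS : IsUnit S) (hD : IsUnit D) (h : S ∘ₗ W = W' ∘ₗ D) :
    Ring.inverse S ∘ₗ W' = W ∘ₗ Ring.inverse D := by
  obtain ⟨S, rfl⟩ := hS
  obtain ⟨D, rfl⟩ := hD
  rw [Ring.inverse_unit, Ring.inverse_unit]
  ext n
  calc S⁻¹.1 (W' n) = S⁻¹.1 (W' (D.1 (D⁻¹.1 n))) := by rw [units_apply_inv_apply]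
    _ = S⁻¹.1 (S.1 (W (D⁻¹.1 n))) := congrArg S⁻¹.1 (LinearMap.congr_fun h (D⁻¹.1 n)).symm
    _ = W (D⁻¹.1 n) := units_inv_apply_apply S _

variable (A : (Module.End R M)ˣ) (C : (Module.End R N)ˣ) (U : M →ₗ[R] N) (V : N →ₗ[R] M)

theorem isUnit_inv_add_comp_inv_comp_iff :
    IsUnit (C⁻¹.1 + U ∘ₗ A⁻¹.1 ∘ₗ V) ↔ IsUnit (V ∘ₗ C.1 ∘ₗ U + A.1) := by
  have left_factor : C⁻¹.1 + U ∘ₗ A⁻¹.1 ∘ₗ V = C⁻¹.1 * (1 + (C.1 ∘ₗ U ∘ₗ A⁻¹.1) ∘ₗ V) := by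
    ext
    simp [units_inv_apply_apply]
  have right_factor : V ∘ₗ C.1 ∘ₗ U + A.1 = (1 + V ∘ₗ C.1 ∘ₗ U ∘ₗ A⁻¹.1) * A.1 := by
    ext
    simp [units_inv_apply_apply, add_comm]
  rw [left_factor, right_factor, Units.isUnit_units_mul, Units.isUnit_mul_units,
    isUnit_one_add_comp_comm]

theorem comp_ringInverse_push_through (hS : IsUnit (V ∘ₗ C.1 ∘ₗ U + A.1)) :
    V ∘ₗ Ring.inverse (C⁻¹.1 + U ∘ₗ A⁻¹.1 ∘ₗ V)
      = A.1 ∘ₗ Ring.inverse (V ∘ₗ C.1 ∘ₗ U + A.1) ∘ₗ V ∘ₗ C.1 := by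
  have intertwine :
      (V ∘ₗ C.1 ∘ₗ U + A.1) ∘ₗ A⁻¹.1 ∘ₗ V = (V ∘ₗ C.1) ∘ₗ (C⁻¹.1 + U ∘ₗ A⁻¹.1 ∘ₗ V) := by
    ext
    simp [units_apply_inv_apply, add_comm]
  rw [ringInverse_comp_eq_comp_ringInverse hS
    ((isUnit_inv_add_comp_inv_comp_iff A C U V).2 hS) intertwine]
  ext
  simp [units_apply_inv_apply]

end PushThrough

section Accretive

variable {𝕜 E F : Type*} [RCLike 𝕜]
  [NormedAddCommGroup E] [InnerProductSpace 𝕜 E] [FiniteDimensional 𝕜 E]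
  [NormedAddCommGroup F] [InnerProductSpace 𝕜 F] [FiniteDimensional 𝕜 F]

theorem isUnit_of_re_inner_pos_s17 {T : Module.End 𝕜 E}
    (hT : ∀ x, x ≠ 0 → 0 < RCLike.re (inner 𝕜 (T x) x)) : IsUnit T := by
  rw [LinearMap.isUnit_iff_ker_eq_bot, LinearMap.ker_eq_bot']
  intro x hx
  by_contra hne
  simpa [hx] using hT x hne

theorem re_inner_smul_adjoint_comp_add_pos {b : 𝕜} (hb : 0 ≤ RCLike.re b) (Q : E →ₗ[𝕜] F)
    {A : Module.End 𝕜 E} {x : E} (hAx : 0 < RCLike.re (inner 𝕜 (A x) x)) :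
    0 < RCLike.re (inner 𝕜 ((b • (LinearMap.adjoint Q ∘ₗ Q) + A) x) x) := by
  have re_inner_smul_adjoint_comp :
      RCLike.re (inner 𝕜 ((b • (LinearMap.adjoint Q ∘ₗ Q)) x) x) = RCLike.re b * ‖Q x‖ ^ 2 := by
    simp [inner_smul_left, LinearMap.adjoint_inner_left]
  rw [LinearMap.add_apply, inner_add_left, map_add, re_inner_smul_adjoint_comp]
  positivity

end Accretive

theorem stmt_17_general {𝕜 Hm H Hp : Type*} [RCLike 𝕜]
    [NormedAddCommGroup Hm] [InnerProductSpace 𝕜 Hm] [FiniteDimensional 𝕜 Hm]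
    [NormedAddCommGroup H] [InnerProductSpace 𝕜 H] [FiniteDimensional 𝕜 H]
    [NormedAddCommGroup Hp] [InnerProductSpace 𝕜 Hp] [FiniteDimensional 𝕜 Hp]
    (Qm : Hm →ₗ[𝕜] H) (Q : H →ₗ[𝕜] Hp) {b : 𝕜} (hb : b ≠ 0) (hb_re : 0 ≤ RCLike.re b)
    {Qf : Module.End 𝕜 H} (hQf : ∀ x, x ≠ 0 → 0 < RCLike.re (inner 𝕜 (Qf x) x)) :
    LinearMap.adjoint (Q ∘ₗ Qm) ∘ₗ Ring.inverse
        (b⁻¹ • (1 : Module.End 𝕜 Hp) + Q ∘ₗ Ring.inverse Qf ∘ₗ LinearMap.adjoint Q)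
      = b • (LinearMap.adjoint Qm ∘ₗ Qf
          ∘ₗ Ring.inverse (b • (LinearMap.adjoint Q ∘ₗ Q) + Qf)
          ∘ₗ LinearMap.adjoint Q) := by
  have hS := isUnit_of_re_inner_pos_s17 fun x hx =>
    re_inner_smul_adjoint_comp_add_pos hb_re Q (hQf x hx)
  obtain ⟨A, rfl⟩ := isUnit_of_re_inner_pos_s17 hQf
  let C : (Module.End 𝕜 Hp)ˣ := Units.mk0 b hb • 1
  have hC : C.1 = b • 1 := rfl
  have hCinv : C⁻¹.1 = b⁻¹ • 1 := rfl
  have hVCU : LinearMap.adjoint Q ∘ₗ C.1 ∘ₗ Q = b • (LinearMap.adjoint Q ∘ₗ Q) := by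
    ext
    simp [hC]
  have push := comp_ringInverse_push_through A C Q (LinearMap.adjoint Q) (hVCU ▸ hS)
  rw [hVCU, hCinv] at push
  rw [Ring.inverse_unit, LinearMap.adjoint_comp, LinearMap.comp_assoc, push]
  ext
  simp [hC]

/-- Identity `Q̌₋* 𝔔̌ = b Q₋* 𝔔 (b Q*Q + 𝔔)⁻¹ Q*` from `H₊` to `H₋`. -/
theorem stmt_17
    {Hm H Hp : Type*}
    [NormedAddCommGroup Hm] [InnerProductSpace ℝ Hm] [FiniteDimensional ℝ Hm]
    [NormedAddCommGroup H] [InnerProductSpace ℝ H] [FiniteDimensional ℝ H]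
    [NormedAddCommGroup Hp] [InnerProductSpace ℝ Hp] [FiniteDimensional ℝ Hp]
    (Qm : Hm →ₗ[ℝ] H) (Q : H →ₗ[ℝ] Hp)
    (b : ℝ) (hb : 0 < b)
    (Qf : Module.End ℝ H) (hQfsym : Qf.IsSymmetric)
    (hQfpos : ∀ x : H, x ≠ 0 → 0 < ⟪Qf x, x⟫)
    (Qfc : Module.End ℝ Hp)
    (hQfc : Qfc = Ring.inverse
      (b⁻¹ • (1 : Module.End ℝ Hp)
        + Q ∘ₗ Ring.inverse Qf ∘ₗ LinearMap.adjoint Q)) :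
    LinearMap.adjoint (Q ∘ₗ Qm) ∘ₗ Qfc
      = b • (LinearMap.adjoint Qm ∘ₗ Qf
          ∘ₗ Ring.inverse (b • (LinearMap.adjoint Q ∘ₗ Q) + Qf)
          ∘ₗ LinearMap.adjoint Q) := by
  rw [hQfc]
  exact stmt_17_general Qm Q hb.ne' hb.le hQfpos
end
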